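/- Let $m \ge 1$ be an integer with $m \ne 3$, and let $G$ be a graph with exactly $m$ edges and no isolated vertices that is not isomorphic to the star $K_{1,m}$. Then $K_{1,m}$ is strictly walk-preferable to $G$; that is, there exists an integer $\ell \ge 1$ with $W^{\ell}(K_{1,m}) > W^{\ell}(G)$ and $W^{i}(K_{1,m}) = W^{i}(G)$ for all $1 \le i \le \ell - 1$. In fact one may take $\ell \le 2$. -/

import Mathlib

open Finset Matrix SimpleGraph
open scoped Classical

/-- `walkCount G ℓ u` is the number of walks of length `ℓ` in `G` starting at `u`
(the quantity `w^ℓ_G(u)` of the paper, with `walkCount G 0 u = 1`). -/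
noncomputable def walkCount {V : Type*} [Fintype V] (G : SimpleGraph V) : ℕ → V → ℕ
  | 0, _ => 1
  | ℓ + 1, u => ∑ v ∈ Finset.univ.filter (fun v => G.Adj u v), walkCount G ℓ v

/-- `totalWalks G ℓ = W^ℓ(G) = ∑_u w^ℓ_G(u)`, the number of walks of length `ℓ` in `G`. -/
noncomputable def totalWalks {V : Type*} [Fintype V] (G : SimpleGraph V) (ℓ : ℕ) : ℕ :=
  ∑ u, walkCount G ℓ u

/-- The spectral radius `ρ(G)` of a graph `G`: the largest eigenvalue of its
adjacency matrix. -/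
noncomputable def spectralRad {V : Type*} [Fintype V] (G : SimpleGraph V) : ℝ :=
  sSup {μ : ℝ | ∃ x : V → ℝ, x ≠ 0 ∧ (G.adjMatrix ℝ) *ᵥ x = μ • x}

lemma star_walks (m : ℕ) : totalWalks (completeBipartiteGraph Unit (Fin m)) 1 = 2 * m ∧
    totalWalks (completeBipartiteGraph Unit (Fin m)) 2 = m * (m + 1) := by
  have hl : (Finset.univ.filter fun x : Unit ⊕ Fin m => x.isLeft = true).card = 1 := by
    rw [Finset.card_filter, Fintype.sum_sum_type]; simp
  have hr : (Finset.univ.filter fun x : Unit ⊕ Fin m => x.isRight = true).card = m := by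
    rw [Finset.card_filter, Fintype.sum_sum_type]; simp
  constructor
  · simp [totalWalks, walkCount, Finset.sum_filter, Fintype.sum_sum_type, -Finset.sum_boole, hl, hr]
    ring
  · simp [totalWalks, walkCount, Finset.sum_filter, Fintype.sum_sum_type, -Finset.sum_boole, hl, hr]
    ring

lemma walkCount_one {V : Type*} [Fintype V] (G : SimpleGraph V) (u : V) :
    walkCount G 1 u = G.degree u := by
  simp only [walkCount, Finset.sum_const, smul_eq_mul, mul_one]
  rw [← SimpleGraph.card_neighborFinset_eq_degree]
  congr 1
  ext v
  simp

lemma total_one {V : Type*} [Fintype V] (G : SimpleGraph V) :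
    totalWalks G 1 = 2 * G.edgeFinset.card := by
  rw [← SimpleGraph.sum_degrees_eq_twice_card_edges]
  simp only [totalWalks, walkCount_one]

lemma total_two {V : Type*} [Fintype V] (G : SimpleGraph V) :
    2 * totalWalks G 2 = ∑ u, ∑ v ∈ G.neighborFinset u, (G.degree u + G.degree v) := by
  have h1 : totalWalks G 2 = ∑ u, ∑ v ∈ G.neighborFinset u, G.degree v := by
    unfold totalWalks
    refine Finset.sum_congr rfl fun u _ => ?_
    rw [walkCount]
    refine Finset.sum_congr (by ext v; simp) fun v _ => walkCount_one G v
  have h2 : ∑ u, ∑ v ∈ G.neighborFinset u, G.degree v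
      = ∑ u, ∑ v ∈ G.neighborFinset u, G.degree u := by
    apply Finset.sum_comm'
    intro x y
    simp [G.adj_comm]
  simp only [Finset.sum_add_distrib]
  rw [← h2, ← h1, two_mul]

lemma deg_add_le {V : Type*} [Fintype V] (G : SimpleGraph V) {u v : V} (h : G.Adj u v) :
    G.degree u + G.degree v =
      (G.incidenceFinset u ∪ G.incidenceFinset v).card + 1 := by
  rw [← G.card_incidenceFinset_eq_degree u, ← G.card_incidenceFinset_eq_degree v,
    ← Finset.card_union_add_card_inter]
  congr 1
  rw [Finset.card_eq_one]
  refine ⟨s(u, v), ?_⟩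
  ext e
  have := G.incidenceSet_inter_incidenceSet_of_adj h
  have h' := Set.ext_iff.1 this e
  simpa using h'

lemma union_sub {V : Type*} [Fintype V] (G : SimpleGraph V) (u v : V) :
    G.incidenceFinset u ∪ G.incidenceFinset v ⊆ G.edgeFinset :=
  Finset.union_subset (G.incidenceFinset_subset u) (G.incidenceFinset_subset v)

lemma iso_of_center {V : Type*} [Fintype V] (G : SimpleGraph V) (m : ℕ) (c : V)
    (hE : G.edgeFinset.card = m) (hiso : ∀ v, 0 < G.degree v)
    (hc : ∀ a b, G.Adj a b → a = c ∨ b = c) :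
    Nonempty (G ≃g completeBipartiteGraph Unit (Fin m)) := by
  have hadj : ∀ v, v ≠ c → G.Adj c v := by
    intro v hv
    obtain ⟨w, hw⟩ := (G.degree_pos_iff_exists_adj v).1 (hiso v)
    rcases hc _ _ hw with h | h
    · exact absurd h hv
    · subst h; exact hw.symm
  have hdeg : G.degree c = m := by
    rw [← hE, ← G.card_incidenceFinset_eq_degree c]
    congr 1
    apply Finset.Subset.antisymm (G.incidenceFinset_subset c)
    intro e he
    induction e with | _ a b
    rw [SimpleGraph.mem_edgeFinset, SimpleGraph.mem_edgeSet] at he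
    rw [SimpleGraph.mem_incidenceFinset]
    refine ⟨he, ?_⟩
    rcases hc _ _ he with h | h <;> simp [h]
  have hcard : Fintype.card {v // ¬ v = c} = Fintype.card (Fin m) := by
    rw [Fintype.card_fin, ← hdeg, ← SimpleGraph.card_neighborFinset_eq_degree,
      Fintype.card_subtype]
    congr 1
    ext v
    simp only [Finset.mem_filter, Finset.mem_univ, true_and, SimpleGraph.mem_neighborFinset]
    exact ⟨hadj v, fun h => h.ne'⟩
  let e2 := Fintype.equivOfCardEq hcard
  let e1 : {v // v = c} ≃ Unit := Equiv.ofUnique _ _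
  let e := (Equiv.sumCompl (fun v => v = c)).symm.trans (Equiv.sumCongr e1 e2)
  refine ⟨⟨e, ?_⟩⟩
  intro a b
  have hl : ∀ a, (e a).isLeft = true ↔ a = c := by
    intro a
    by_cases h : a = c
    · simp [e, Equiv.sumCompl_symm_apply_of_pos, h]
    · simp [e, Equiv.sumCompl_symm_apply_of_neg, h]
  have hr : ∀ a, (e a).isRight = true ↔ ¬ a = c := by
    intro a
    rw [← hl, ← Sum.not_isLeft]
  change ((e a).isLeft = true ∧ (e b).isRight = true ∨ (e a).isRight = true ∧ (e b).isLeft = true) ↔ _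
  rw [hl, hl, hr, hr]
  constructor
  · rintro (⟨rfl, h⟩ | ⟨h, rfl⟩)
    · exact hadj _ h
    · exact (hadj _ h).symm
  · intro h
    have := h.ne
    rcases hc _ _ h with rfl | rfl
    · exact Or.inl ⟨rfl, this.symm⟩
    · exact Or.inr ⟨this, rfl⟩

lemma exists_center {V : Type*} [Fintype V] (G : SimpleGraph V) (m : ℕ)
    (hm : 1 ≤ m) (hm3 : m ≠ 3) (hE : G.edgeFinset.card = m)
    (heq : ∀ u v, G.Adj u v → m + 1 ≤ G.degree u + G.degree v) :
    ∃ c, ∀ a b, G.Adj a b → a = c ∨ b = c := by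
  have key : ∀ u v a b, G.Adj u v → G.Adj a b → (a = u ∨ b = u) ∨ (a = v ∨ b = v) := by
    intro u v a b huv hab
    have h1 := heq u v huv
    rw [deg_add_le G huv, ← hE] at h1
    have h2 := Finset.eq_of_subset_of_card_le (union_sub G u v) (by omega)
    have h3 : s(a, b) ∈ G.edgeFinset := by simpa using hab
    rw [← h2, Finset.mem_union, SimpleGraph.mem_incidenceFinset,
      SimpleGraph.mem_incidenceFinset] at h3
    rcases h3 with h | h
    · have := h.2; rw [Sym2.mem_iff] at this; tauto
    · have := h.2; rw [Sym2.mem_iff] at this; tauto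
  obtain ⟨e, he⟩ := Finset.card_pos.1 (by omega : 0 < G.edgeFinset.card)
  induction e with | _ u v
  rw [SimpleGraph.mem_edgeFinset, SimpleGraph.mem_edgeSet] at he
  by_cases hu : ∀ x, G.Adj u x → x = v
  · refine ⟨v, fun a b hab => ?_⟩
    rcases key u v a b he hab with (rfl | rfl) | h
    · exact Or.inr (hu _ hab)
    · exact Or.inl (hu _ hab.symm)
    · exact h
  by_cases hv : ∀ x, G.Adj v x → x = u
  · refine ⟨u, fun a b hab => ?_⟩
    rcases key u v a b he hab with h | (rfl | rfl)
    · exact h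
    · exact Or.inr (hv _ hab)
    · exact Or.inl (hv _ hab.symm)
  exfalso
  push Not at hu hv
  obtain ⟨x, hux, hxv⟩ := hu
  obtain ⟨y, hvy, hyu⟩ := hv
  have huvne := he.ne
  have hall : ∀ x y, G.Adj u x → x ≠ v → G.Adj v y → y ≠ u → x = y := by
    intro x y hux hxv hvy hyu
    rcases key u x v y hux hvy with (h | h) | (h | h)
    · exact absurd h.symm huvne
    · exact absurd h hyu
    · exact absurd h.symm hxv
    · exact h.symm
  have hxy := hall x y hux hxv hvy hyu
  subst hxy
  have du : G.degree u ≤ 2 := by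
    rw [← SimpleGraph.card_neighborFinset_eq_degree]
    refine (Finset.card_le_card (t := {v, x}) ?_).trans Finset.card_le_two
    intro z hz
    rw [SimpleGraph.mem_neighborFinset] at hz
    by_cases hzv : z = v
    · simp [hzv]
    · simp [hall z x hz hzv hvy hyu]
  have dv : G.degree v ≤ 2 := by
    rw [← SimpleGraph.card_neighborFinset_eq_degree]
    refine (Finset.card_le_card (t := {u, x}) ?_).trans Finset.card_le_two
    intro z hz
    rw [SimpleGraph.mem_neighborFinset] at hz
    by_cases hzv : z = u
    · simp [hzv]
    · simp [hall x z hux hxv hz hzv]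
  have h4 := heq u v he
  have h3 : ({s(u, v), s(u, x), s(v, x)} : Finset (Sym2 V)).card ≤ G.edgeFinset.card := by
    apply Finset.card_le_card
    intro e he'
    simp only [Finset.mem_insert, Finset.mem_singleton] at he'
    rcases he' with rfl | rfl | rfl <;> simpa
  rw [Finset.card_eq_three.2 ⟨s(u, v), s(u, x), s(v, x), ?_, ?_, ?_, rfl⟩] at h3
  · omega
  all_goals
    have := hux.ne
    have := hvy.ne
    simp only [ne_eq, Sym2.eq_iff]
    grind

/-- For `m ≥ 1`, `m ≠ 3`: if `G` has exactly `m` edges, no isolated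
vertices, and is not isomorphic to the star `K_{1,m}`, then `K_{1,m}` is strictly
walk-preferable to `G`, witnessed by some `ℓ ≤ 2`. -/
theorem stmt_11 {V : Type*} [Fintype V] (m : ℕ) (hm : 1 ≤ m) (hm3 : m ≠ 3)
    (G : SimpleGraph V)
    (hE : G.edgeFinset.card = m) (hiso : ∀ v, 0 < G.degree v)
    (hnot : ¬ Nonempty (G ≃g completeBipartiteGraph Unit (Fin m))) :
    ∃ ℓ : ℕ, 1 ≤ ℓ ∧ ℓ ≤ 2 ∧
      totalWalks G ℓ < totalWalks (completeBipartiteGraph Unit (Fin m)) ℓ ∧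
      ∀ i : ℕ, 1 ≤ i → i ≤ ℓ - 1 →
        totalWalks (completeBipartiteGraph Unit (Fin m)) i = totalWalks G i := by
  by_contra hcon
  have hs := star_walks m
  have h1 := total_one G
  rw [hE] at h1
  have hge : m * (m + 1) ≤ totalWalks G 2 := by
    by_contra hlt
    refine hcon ⟨2, by norm_num, le_rfl, by rw [hs.2]; omega, ?_⟩
    intro i hi hi2
    have : i = 1 := by omega
    subst this
    rw [hs.1, h1]
  have hle : ∀ u v, G.Adj u v → G.degree u + G.degree v ≤ m + 1 := by
    intro u v h
    have := Finset.card_le_card (union_sub G u v)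
    rw [deg_add_le G h]
    omega
  have hsum : ∑ u, ∑ v ∈ G.neighborFinset u, (m + 1) = 2 * (m * (m + 1)) := by
    simp only [Finset.sum_const, SimpleGraph.card_neighborFinset_eq_degree, smul_eq_mul]
    rw [← Finset.sum_mul, SimpleGraph.sum_degrees_eq_twice_card_edges, hE]
    ring
  have heq : ∀ u v, G.Adj u v → m + 1 ≤ G.degree u + G.degree v := by
    intro u v h
    by_contra hlt
    have : ∑ u, ∑ v ∈ G.neighborFinset u, (G.degree u + G.degree v)
        < ∑ u, ∑ v ∈ G.neighborFinset u, (m + 1) := by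
      refine Finset.sum_lt_sum (fun a _ => Finset.sum_le_sum fun b hb => hle a b (by simpa using hb))
        ⟨u, Finset.mem_univ u, ?_⟩
      exact Finset.sum_lt_sum (fun b hb => hle u b (by simpa using hb))
        ⟨v, by simpa using h, by omega⟩
    rw [← total_two, hsum] at this
    omega
  obtain ⟨c, hc⟩ := exists_center G m hm hm3 hE heq
  exact hnot (iso_of_center G m c hE hiso hc)
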